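/- Let χ ∈ 𝒮(ℝ) be even and let χ₀ : ℝ → ℝ be smooth, supported in [−2,2], and equal to 1 on [−1,1]. Let λ ≥ 1 and let ε'₁, ε'₂, ε''₁, ε''₂ : ℝ² → (0,1) be arbitrary functions. For z = (z₁,z₂), w = (w₁,w₂) ∈ ℝ², define K^λ(z,w) = ∫_{ℝ²} e^{−i(ξ(z₁−w₁) + η(z₂−w₂))} χ₀(ξ/λ)⁴ χ₀(η/λ)⁴ χ̂(ε'₁(z)ξ) χ̂(ε'₂(z)ξ) χ̂(ε'₁(w)ξ) χ̂(ε'₂(w)ξ) χ̂(ε''₁(z)η) χ̂(ε''₂(z)η) χ̂(ε''₁(w)η) χ̂(ε''₂(w)η) dξ dη, and set ε'(z,w,λ) = max{ε'₁(z), ε'₂(z), ε'₁(w), ε'₂(w), λ⁻¹} and ε''(z,w,λ) = max{ε''₁(z), ε''₂(z), ε''₁(w), ε''₂(w), λ⁻¹}. Then for every N ∈ ℕ there is a constant C_N, depending only on N, χ and χ₀ (not on λ, z, w, or the ε-functions), such that |K^λ(z,w)| ≤ C_N · (ε'(z,w,λ) ε''(z,w,λ))⁻¹ · (1 + |z₁−w₁|/ε'(z,w,λ))^{−N}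 · (1 + |z₂−w₂|/ε''(z,w,λ))^{−N}. -/

import Mathlib

open MeasureTheory Set SchwartzMap ENNReal

/-- The Fourier transform on `ℝ`, `χ̂(ξ) = ∫ χ(u) e^{-iuξ} du`. -/
noncomputable def fourierTransform1 (χ : ℝ → ℂ) (ξ : ℝ) : ℂ :=
  ∫ u : ℝ, Complex.exp (-Complex.I * (u * ξ)) * χ u

/-!
The kernel is a product of two one-dimensional oscillatory integrals, each the Fourier transform of
an amplitude `∏ᵢ φᵢ(rᵢ ξ)` with `φᵢ` Schwartz: the cutoff `χ₀` enters as four factors with dilation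
`λ⁻¹`, and the scale `ε'` or `ε''` is then the largest dilation `ρ = maxᵢ |rᵢ|`. In the Leibniz rule
each derivative costs at most a factor `ρ`, and the factor with the largest dilation alone already
decays like `(1 + (ρ ξ)²)⁻¹`. So the `n`-th derivative of the amplitude has `L¹` norm
`O(ρⁿ ρ⁻¹)`, uniformly in the dilations, and integrating by parts `0` and `N` times bounds the
integral at frequency `y` by `O(ρ⁻¹ (1 + |y| / ρ)⁻ᴺ)`.
-/

open scoped FourierTransform ContDiff

section FourierDecay

variable {E : Type*} [NormedAddCommGroup E] [NormedSpace ℂ E]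

lemma integral_exp_smul_eq_fourier (f : ℝ → E) (y : ℝ) :
    ∫ s : ℝ, Complex.exp (-Complex.I * (s * y)) • f s = 𝓕 f (y / (2 * Real.pi)) := by
  rw [Real.fourier_real_eq_integral_exp_smul]
  congr! 3 with s
  push_cast
  field_simp

lemma abs_pow_mul_norm_integral_exp_smul_le {f : ℝ → E} {n : ℕ} (hf : ContDiff ℝ n f)
    (hf_int : ∀ k ≤ n, Integrable (iteratedDeriv k f)) (y : ℝ) :
    |y| ^ n * ‖∫ s : ℝ, Complex.exp (-Complex.I * (s * y)) • f s‖ ≤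
      ∫ s, ‖iteratedDeriv n f s‖ := by
  have hfreq : 2 * Real.pi * Complex.I * (y / (2 * Real.pi) : ℝ) = Complex.I * y := by
    push_cast
    field_simp
  have hderiv : 𝓕 (iteratedDeriv n f) (y / (2 * Real.pi)) =
      (Complex.I * y) ^ n • 𝓕 f (y / (2 * Real.pi)) := by
    rw [Real.fourier_iteratedDeriv (N := n) hf (fun k hk => hf_int k (by exact_mod_cast hk)) le_rfl]
    simp only [hfreq]
  calc |y| ^ n * ‖∫ s : ℝ, Complex.exp (-Complex.I * (s * y)) • f s‖
      = ‖𝓕 (iteratedDeriv n f) (y / (2 * Real.pi))‖ := by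
        rw [hderiv, integral_exp_smul_eq_fourier]
        simp [norm_smul]
    _ ≤ ∫ s, ‖iteratedDeriv n f s‖ :=
        VectorFourier.norm_fourierIntegral_le_integral_norm _ _ _ _ _

end FourierDecay

lemma exists_norm_iteratedDeriv_dilation_le {F : Type*} [NormedAddCommGroup F] [NormedSpace ℝ F]
    (φ : 𝓢(ℝ, F)) (n : ℕ) :
    ∃ C : ℝ, 0 < C ∧ ∀ r x : ℝ,
      ‖iteratedDeriv n (fun t => φ (r * t)) x‖ ≤ C * |r| ^ n * (1 + (r * x) ^ 2)⁻¹ := by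
  obtain ⟨A, hA₀, hA⟩ := φ.decay 0 n
  obtain ⟨B, hB₀, hB⟩ := φ.decay 2 n
  simp only [norm_iteratedFDeriv_eq_norm_iteratedDeriv, pow_zero, one_mul, Real.norm_eq_abs,
    sq_abs] at hA hB
  refine ⟨A + B, by positivity, fun r x => ?_⟩
  have hdecay : ‖iteratedDeriv n φ (r * x)‖ ≤ (A + B) * (1 + (r * x) ^ 2)⁻¹ := by
    rw [← div_eq_mul_inv, le_div_iff₀ (by positivity)]
    linarith [hA (r * x), hB (r * x)]
  calc ‖iteratedDeriv n (fun t => φ (r * t)) x‖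
      = |r| ^ n * ‖iteratedDeriv n φ (r * x)‖ := by
        rw [iteratedDeriv_comp_const_smul (φ.smooth n), norm_smul, norm_pow, Real.norm_eq_abs]
    _ ≤ |r| ^ n * ((A + B) * (1 + (r * x) ^ 2)⁻¹) := by gcongr
    _ = (A + B) * |r| ^ n * (1 + (r * x) ^ 2)⁻¹ := by ring

lemma integral_inv_one_add_mul_sq (ρ : ℝ) :
    ∫ x : ℝ, (1 + (ρ * x) ^ 2)⁻¹ = |ρ|⁻¹ * Real.pi := by
  rw [Measure.integral_comp_mul_left (fun x : ℝ => (1 + x ^ 2)⁻¹), integral_univ_inv_one_add_sq,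
    abs_inv, smul_eq_mul]

lemma integrable_inv_one_add_mul_sq {ρ : ℝ} (hρ : ρ ≠ 0) :
    Integrable fun x : ℝ => (1 + (ρ * x) ^ 2)⁻¹ :=
  integrable_inv_one_add_sq.comp_mul_left' hρ

lemma integral_exp_mul_prod_eq_mul (f g : ℝ → ℂ) (x y : ℝ) :
    ∫ v : ℝ × ℝ, Complex.exp (-Complex.I * (v.1 * x + v.2 * y)) * (f v.1 * g v.2) =
      (∫ s : ℝ, Complex.exp (-Complex.I * (s * x)) * f s) *
        ∫ t : ℝ, Complex.exp (-Complex.I * (t * y)) * g t := by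
  rw [← integral_prod_mul, ← Measure.volume_eq_prod]
  congr 1 with v
  rw [mul_add, Complex.exp_add]
  ring

section DilationProd

variable {ι κ : Type*} [Fintype ι] [Fintype κ]

/-- The product `∏ᵢ φᵢ(rᵢ ξ)` of dilates of Schwartz functions: the amplitude, in one variable, of
the oscillatory integrals below. Its scale is the supremum norm `‖r‖ = maxᵢ |rᵢ|`. -/
noncomputable def dilationProd (φ : ι → 𝓢(ℝ, ℂ)) (r : ι → ℝ) (ξ : ℝ) : ℂ :=
  ∏ i, φ i (r i * ξ)

lemma contDiff_dilationProd (φ : ι → 𝓢(ℝ, ℂ)) (r : ι → ℝ) : ContDiff ℝ ∞ (dilationProd φ r) :=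
  contDiff_prod fun i _ => ((φ i).smooth ⊤).comp (contDiff_const.mul contDiff_id)

-- Only the factor with the largest dilation is needed; every other one is at most `1`.
lemma prod_inv_one_add_sq_le {r : ι → ℝ} (hr : r ≠ 0) (x : ℝ) :
    ∏ i, (1 + (r i * x) ^ 2)⁻¹ ≤ (1 + (‖r‖ * x) ^ 2)⁻¹ := by
  classical
  have : Nonempty ι := (Function.ne_iff.1 hr).nonempty
  obtain ⟨j, hj⟩ : ∃ j, ‖r j‖ = ‖r‖ := by
    obtain ⟨j, -, hj⟩ := Finset.exists_mem_eq_sup Finset.univ Finset.univ_nonempty (‖r ·‖₊)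
    exact ⟨j, by rw [Pi.norm_def, hj, coe_nnnorm]⟩
  calc ∏ i, (1 + (r i * x) ^ 2)⁻¹
      = (1 + (r j * x) ^ 2)⁻¹ * ∏ i ∈ Finset.univ.erase j, (1 + (r i * x) ^ 2)⁻¹ :=
        (Finset.mul_prod_erase _ _ (Finset.mem_univ j)).symm
    _ ≤ (1 + (r j * x) ^ 2)⁻¹ :=
        mul_le_of_le_one_right (by positivity) <| Finset.prod_le_one (fun i _ => by positivity)
          fun i _ => inv_le_one_of_one_le₀ (le_add_of_nonneg_right (sq_nonneg _))
    _ = (1 + (‖r‖ * x) ^ 2)⁻¹ := by rw [← hj, Real.norm_eq_abs, mul_pow, mul_pow, sq_abs]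

lemma prod_norm_pow_count_le {E : Type*} [SeminormedAddCommGroup E] [DecidableEq ι] (r : ι → E)
    {n : ℕ} (p : Sym ι n) :
    ∏ i, ‖r i‖ ^ (p : Multiset ι).count i ≤ ‖r‖ ^ n := by
  calc ∏ i, ‖r i‖ ^ (p : Multiset ι).count i
      ≤ ∏ i, ‖r‖ ^ (p : Multiset ι).count i := by
        gcongr with i
        exact norm_le_pi_norm r i
    _ = ‖r‖ ^ n := by
        rw [Finset.prod_pow_eq_pow_sum, Multiset.sum_count_eq_card fun i _ => Finset.mem_univ i,
          Sym.card_coe]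

lemma exists_norm_iteratedDeriv_dilationProd_le (φ : ι → 𝓢(ℝ, ℂ)) (n : ℕ) :
    ∃ C : ℝ, 0 < C ∧ ∀ r : ι → ℝ, r ≠ 0 → ∀ x : ℝ,
      ‖iteratedDeriv n (dilationProd φ r) x‖ ≤ C * ‖r‖ ^ n * (1 + (‖r‖ * x) ^ 2)⁻¹ := by
  classical
  choose A hA₀ hA using fun i => exists_norm_iteratedDeriv_dilation_le (φ i)
  let S : ℝ := ∑ p ∈ (Finset.univ : Finset ι).sym n, ((p : Multiset ι).countPerms : ℝ) *
    ∏ i, A i ((p : Multiset ι).count i)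
  have hS : 0 ≤ S := Finset.sum_nonneg fun p _ =>
    mul_nonneg (Nat.cast_nonneg _) (Finset.prod_nonneg fun i _ => (hA₀ i _).le)
  refine ⟨S + 1, by positivity, fun r hr x => ?_⟩
  have hterm (p : Sym ι n) :
      ∏ i, ‖iteratedDeriv ((p : Multiset ι).count i) (fun t => φ i (r i * t)) x‖ ≤
        (∏ i, A i ((p : Multiset ι).count i)) * (‖r‖ ^ n * (1 + (‖r‖ * x) ^ 2)⁻¹) := by
    refine (Finset.prod_le_prod (fun i _ => norm_nonneg _) fun i _ => hA i _ (r i) x).trans ?_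
    rw [Finset.prod_mul_distrib, Finset.prod_mul_distrib, mul_assoc]
    have := Finset.prod_nonneg fun i (_ : i ∈ Finset.univ) => (hA₀ i ((p : Multiset ι).count i)).le
    gcongr
    · exact prod_norm_pow_count_le r p
    · exact prod_inv_one_add_sq_le hr x
  have hleibniz := norm_iteratedFDeriv_prod_le (𝕜 := ℝ) (u := Finset.univ) (N := ∞) (n := n)
    (f := fun i t => φ i (r i * t)) (x := x)
    (fun i _ => ((φ i).smooth ⊤).comp (contDiff_const.mul contDiff_id)) (by exact_mod_cast le_top)
  simp only [norm_iteratedFDeriv_eq_norm_iteratedDeriv] at hleibniz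
  calc ‖iteratedDeriv n (dilationProd φ r) x‖
      ≤ S * (‖r‖ ^ n * (1 + (‖r‖ * x) ^ 2)⁻¹) := by
        rw [Finset.sum_mul]
        refine hleibniz.trans (Finset.sum_le_sum fun p _ => ?_)
        rw [mul_assoc]
        exact mul_le_mul_of_nonneg_left (hterm p) (Nat.cast_nonneg _)
    _ ≤ (S + 1) * ‖r‖ ^ n * (1 + (‖r‖ * x) ^ 2)⁻¹ := by
        rw [mul_assoc]
        gcongr
        linarith

lemma integrable_iteratedDeriv_dilationProd (φ : ι → 𝓢(ℝ, ℂ)) {r : ι → ℝ} (hr : r ≠ 0) (n : ℕ) :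
    Integrable (iteratedDeriv n (dilationProd φ r)) := by
  obtain ⟨C, -, hC⟩ := exists_norm_iteratedDeriv_dilationProd_le φ n
  refine ((integrable_inv_one_add_mul_sq (norm_ne_zero_iff.2 hr)).const_mul _).mono' ?_
    (.of_forall (hC r hr))
  exact ((contDiff_dilationProd φ r).continuous_iteratedDeriv n
    (by exact_mod_cast le_top)).aestronglyMeasurable

lemma exists_integral_norm_iteratedDeriv_dilationProd_le (φ : ι → 𝓢(ℝ, ℂ)) (n : ℕ) :
    ∃ C : ℝ, 0 < C ∧ ∀ r : ι → ℝ, r ≠ 0 →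
      ∫ x, ‖iteratedDeriv n (dilationProd φ r) x‖ ≤ C * ‖r‖ ^ n * ‖r‖⁻¹ := by
  obtain ⟨C, hC₀, hC⟩ := exists_norm_iteratedDeriv_dilationProd_le φ n
  refine ⟨C * Real.pi, by positivity, fun r hr => ?_⟩
  calc ∫ x, ‖iteratedDeriv n (dilationProd φ r) x‖
      ≤ ∫ x, C * ‖r‖ ^ n * (1 + (‖r‖ * x) ^ 2)⁻¹ :=
        integral_mono (integrable_iteratedDeriv_dilationProd φ hr n).norm
          ((integrable_inv_one_add_mul_sq (norm_ne_zero_iff.2 hr)).const_mul _) (hC r hr)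
    _ = C * Real.pi * ‖r‖ ^ n * ‖r‖⁻¹ := by
        rw [integral_const_mul, integral_inv_one_add_mul_sq, abs_norm]
        ring

lemma exists_norm_integral_exp_mul_dilationProd_le (φ : ι → 𝓢(ℝ, ℂ)) (N : ℕ) :
    ∃ C : ℝ, 0 < C ∧ ∀ r : ι → ℝ, r ≠ 0 → ∀ y : ℝ,
      ‖∫ s : ℝ, Complex.exp (-Complex.I * (s * y)) * dilationProd φ r s‖ ≤
        C * ‖r‖⁻¹ * ((1 + |y| / ‖r‖) ^ N)⁻¹ := by
  choose A hA₀ hA using exists_integral_norm_iteratedDeriv_dilationProd_le φ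
  have := hA₀ 0
  have := hA₀ N
  refine ⟨2 ^ (N - 1) * (A 0 + A N), by positivity, fun r hr y => ?_⟩
  set D := ‖∫ s : ℝ, Complex.exp (-Complex.I * (s * y)) * dilationProd φ r s‖
  have hmoment (n : ℕ) : (|y| / ‖r‖) ^ n * D ≤ A n * ‖r‖⁻¹ := by
    have hyD : |y| ^ n * D ≤ A n * ‖r‖ ^ n * ‖r‖⁻¹ :=
      (abs_pow_mul_norm_integral_exp_smul_le
        ((contDiff_dilationProd φ r).of_le (by exact_mod_cast le_top))
        (fun k _ => integrable_iteratedDeriv_dilationProd φ hr k) y).trans (hA n r hr)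
    rw [div_pow, div_mul_eq_mul_div, div_le_iff₀ (by positivity)]
    linarith
  rw [← div_eq_mul_inv, le_div_iff₀ (by positivity)]
  calc D * (1 + |y| / ‖r‖) ^ N
      ≤ D * (2 ^ (N - 1) * (1 ^ N + (|y| / ‖r‖) ^ N)) := by
        gcongr
        exact add_pow_le zero_le_one (by positivity) N
    _ = 2 ^ (N - 1) * ((|y| / ‖r‖) ^ 0 * D + (|y| / ‖r‖) ^ N * D) := by ring
    _ ≤ 2 ^ (N - 1) * (A 0 * ‖r‖⁻¹ + A N * ‖r‖⁻¹) :=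
        mul_le_mul_of_nonneg_left (add_le_add (hmoment 0) (hmoment N)) (by positivity)
    _ = 2 ^ (N - 1) * (A 0 + A N) * ‖r‖⁻¹ := by ring

lemma exists_norm_integral_exp_mul_dilationProd_mul_dilationProd_le
    (φ : ι → 𝓢(ℝ, ℂ)) (ψ : κ → 𝓢(ℝ, ℂ)) (N : ℕ) :
    ∃ C : ℝ, 0 < C ∧ ∀ (r : ι → ℝ) (s : κ → ℝ), r ≠ 0 → s ≠ 0 → ∀ x y : ℝ,
      ‖∫ v : ℝ × ℝ, Complex.exp (-Complex.I * (v.1 * x + v.2 * y)) *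
          (dilationProd φ r v.1 * dilationProd ψ s v.2)‖ ≤
        C * (‖r‖ * ‖s‖)⁻¹ * ((1 + |x| / ‖r‖) ^ N)⁻¹ * ((1 + |y| / ‖s‖) ^ N)⁻¹ := by
  obtain ⟨A, hA₀, hA⟩ := exists_norm_integral_exp_mul_dilationProd_le φ N
  obtain ⟨B, hB₀, hB⟩ := exists_norm_integral_exp_mul_dilationProd_le ψ N
  refine ⟨A * B, by positivity, fun r s hr hs x y => ?_⟩
  rw [integral_exp_mul_prod_eq_mul, norm_mul]
  calc _ ≤ (A * ‖r‖⁻¹ * ((1 + |x| / ‖r‖) ^ N)⁻¹) * (B * ‖s‖⁻¹ * ((1 + |y| / ‖s‖) ^ N)⁻¹) :=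
        mul_le_mul (hA r hr x) (hB s hs y) (norm_nonneg _) (by positivity)
    _ = _ := by
        rw [mul_inv]
        ring

end DilationProd

lemma exists_schwartzMap_eq_fourierTransform1 (χ : 𝓢(ℝ, ℂ)) :
    ∃ φ : 𝓢(ℝ, ℂ), fourierTransform1 χ = φ := by
  let dilation : ℝ ≃L[ℝ] ℝ :=
    ContinuousLinearEquiv.unitsEquivAut ℝ (.mk0 (2 * Real.pi)⁻¹ (by positivity))
  refine ⟨compCLMOfContinuousLinearEquiv ℂ dilation (𝓕 χ), funext fun ξ => ?_⟩
  exact integral_exp_smul_eq_fourier χ ξ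

lemma norm_vecCons {E : Type*} [SeminormedAddCommGroup E] {n : ℕ} (a : E) (v : Fin n → E) :
    ‖Matrix.vecCons a v‖ = max ‖a‖ ‖v‖ := by
  refine le_antisymm ((pi_norm_le_iff_of_nonneg (by positivity)).2 ?_) (max_le ?_ ?_)
  · exact Fin.cases (le_max_left _ _) fun i => (norm_le_pi_norm v i).trans (le_max_right _ _)
  · exact norm_le_pi_norm (Matrix.vecCons a v) 0
  · exact (pi_norm_le_iff_of_nonneg (norm_nonneg _)).2 fun i =>
      norm_le_pi_norm (Matrix.vecCons a v) i.succ

/-- The dilations of the eight factors `χ̂(aξ) χ̂(bξ) χ̂(cξ) χ̂(dξ) χ₀(ξ/lam)⁴` of the kernel in one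
of its two variables; the supremum norm of this vector is the scale `ε'` or `ε''`. -/
noncomputable def kernelScales (a b c d lam : ℝ) : Fin 8 → ℝ :=
  ![a, b, c, d, lam⁻¹, lam⁻¹, lam⁻¹, lam⁻¹]

lemma norm_kernelScales {a b c d lam : ℝ} (ha : 0 ≤ a) (hb : 0 ≤ b) (hc : 0 ≤ c) (hd : 0 ≤ d)
    (hlam : 0 ≤ lam) :
    ‖kernelScales a b c d lam‖ = max (max (max a b) (max c d)) lam⁻¹ := by
  simp [kernelScales, norm_vecCons, norm_of_subsingleton, abs_of_nonneg, max_assoc, *]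

lemma kernelScales_ne_zero (a b c d : ℝ) {lam : ℝ} (hlam : lam ≠ 0) :
    kernelScales a b c d lam ≠ 0 :=
  fun h => inv_ne_zero hlam (congrFun h 4)

lemma dilationProd_kernelScales (φ χ₀ : 𝓢(ℝ, ℂ)) (a b c d lam ξ : ℝ) :
    dilationProd ![φ, φ, φ, φ, χ₀, χ₀, χ₀, χ₀] (kernelScales a b c d lam) ξ =
      χ₀ (ξ / lam) ^ 4 * φ (a * ξ) * φ (b * ξ) * φ (c * ξ) * φ (d * ξ) := by
  simp only [dilationProd, kernelScales, Fin.prod_univ_eight, Fin.isValue, Matrix.cons_val_zero,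
    Matrix.cons_val_one, Matrix.cons_val, div_eq_inv_mul]
  ring

theorem maximal_restriction_stmt9_general (χ χ₀ : 𝓢(ℝ, ℂ)) (N : ℕ) :
    ∃ C : ℝ, 0 < C ∧
      ∀ (lam : ℝ), 0 < lam →
      ∀ (e₁' e₂' e₁'' e₂'' : ℝ × ℝ → ℝ),
        (∀ z, 0 ≤ e₁' z) → (∀ z, 0 ≤ e₂' z) → (∀ z, 0 ≤ e₁'' z) → (∀ z, 0 ≤ e₂'' z) →
      ∀ z w : ℝ × ℝ,
        ‖∫ v : ℝ × ℝ,
            Complex.exp (-Complex.I * (v.1 * (z.1 - w.1) + v.2 * (z.2 - w.2))) *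
            (χ₀ (v.1 / lam) ^ 4 * χ₀ (v.2 / lam) ^ 4) *
            fourierTransform1 χ (e₁' z * v.1) * fourierTransform1 χ (e₂' z * v.1) *
            fourierTransform1 χ (e₁' w * v.1) * fourierTransform1 χ (e₂' w * v.1) *
            fourierTransform1 χ (e₁'' z * v.2) * fourierTransform1 χ (e₂'' z * v.2) *
            fourierTransform1 χ (e₁'' w * v.2) * fourierTransform1 χ (e₂'' w * v.2)‖ ≤
          C * (max (max (max (e₁' z) (e₂' z)) (max (e₁' w) (e₂' w))) lam⁻¹ *
                max (max (max (e₁'' z) (e₂'' z)) (max (e₁'' w) (e₂'' w))) lam⁻¹)⁻¹ *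
            ((1 + |z.1 - w.1| /
              max (max (max (e₁' z) (e₂' z)) (max (e₁' w) (e₂' w))) lam⁻¹) ^ N)⁻¹ *
            ((1 + |z.2 - w.2| /
              max (max (max (e₁'' z) (e₂'' z)) (max (e₁'' w) (e₂'' w))) lam⁻¹) ^ N)⁻¹ := by
  obtain ⟨φ, hφ⟩ := exists_schwartzMap_eq_fourierTransform1 χ
  let factors : Fin 8 → 𝓢(ℝ, ℂ) := ![φ, φ, φ, φ, χ₀, χ₀, χ₀, χ₀]
  obtain ⟨C, hC₀, hC⟩ :=
    exists_norm_integral_exp_mul_dilationProd_mul_dilationProd_le factors factors N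
  refine ⟨C, hC₀, fun lam hlam e₁' e₂' e₁'' e₂'' h₁' h₂' h₁'' h₂'' z w => ?_⟩
  have hbound := hC _ _ (kernelScales_ne_zero (e₁' z) (e₂' z) (e₁' w) (e₂' w) hlam.ne')
    (kernelScales_ne_zero (e₁'' z) (e₂'' z) (e₁'' w) (e₂'' w) hlam.ne') (z.1 - w.1) (z.2 - w.2)
  rw [norm_kernelScales (h₁' z) (h₂' z) (h₁' w) (h₂' w) hlam.le,
    norm_kernelScales (h₁'' z) (h₂'' z) (h₁'' w) (h₂'' w) hlam.le] at hbound
  convert hbound using 4 with v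
  simp only [hφ, factors, dilationProd_kernelScales, Complex.ofReal_sub]
  ring

/-- the kernel `K^λ(z,w)` of `(T^λ)* T^λ` satisfies, for every `N`, the
uniform product-kernel bound
`|K^λ(z,w)| ≤ C_N (ε'ε'')⁻¹ (1+|z₁−w₁|/ε')^{−N} (1+|z₂−w₂|/ε'')^{−N}`, where
`ε' = ε'(z,w,λ)`, `ε'' = ε''(z,w,λ)` are the maxima of the corresponding scale values
and `λ⁻¹`, with `C_N` depending only on `N`, `χ` and `χ₀`. -/
theorem maximal_restriction_stmt9
    (χ : 𝓢(ℝ, ℝ)) (hχeven : ∀ u, χ (-u) = χ u)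
    (χ₀ : ℝ → ℝ) (hχ₀smooth : ContDiff ℝ (⊤ : ℕ∞) χ₀)
    (hχ₀supp : Function.support χ₀ ⊆ Icc (-2 : ℝ) 2)
    (hχ₀one : ∀ x ∈ Icc (-1 : ℝ) 1, χ₀ x = 1) :
    ∀ N : ℕ, ∃ C : ℝ, 0 < C ∧
      ∀ (lam : ℝ), 1 ≤ lam →
      ∀ (e₁' e₂' e₁'' e₂'' : ℝ × ℝ → ℝ),
        (∀ z, e₁' z ∈ Ioo (0 : ℝ) 1) → (∀ z, e₂' z ∈ Ioo (0 : ℝ) 1) →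
        (∀ z, e₁'' z ∈ Ioo (0 : ℝ) 1) → (∀ z, e₂'' z ∈ Ioo (0 : ℝ) 1) →
      ∀ z w : ℝ × ℝ,
        ‖∫ v : ℝ × ℝ,
            Complex.exp (-Complex.I * (v.1 * (z.1 - w.1) + v.2 * (z.2 - w.2))) *
            ((χ₀ (v.1 / lam) ^ 4 * χ₀ (v.2 / lam) ^ 4 : ℝ) : ℂ) *
            fourierTransform1 (fun u => (χ u : ℂ)) (e₁' z * v.1) *
            fourierTransform1 (fun u => (χ u : ℂ)) (e₂' z * v.1) *
            fourierTransform1 (fun u => (χ u : ℂ)) (e₁' w * v.1) *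
            fourierTransform1 (fun u => (χ u : ℂ)) (e₂' w * v.1) *
            fourierTransform1 (fun u => (χ u : ℂ)) (e₁'' z * v.2) *
            fourierTransform1 (fun u => (χ u : ℂ)) (e₂'' z * v.2) *
            fourierTransform1 (fun u => (χ u : ℂ)) (e₁'' w * v.2) *
            fourierTransform1 (fun u => (χ u : ℂ)) (e₂'' w * v.2)‖ ≤
          C * (max (max (max (e₁' z) (e₂' z)) (max (e₁' w) (e₂' w))) lam⁻¹ *
                max (max (max (e₁'' z) (e₂'' z)) (max (e₁'' w) (e₂'' w))) lam⁻¹)⁻¹ *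
            ((1 + |z.1 - w.1| / max (max (max (e₁' z) (e₂' z)) (max (e₁' w) (e₂' w))) lam⁻¹) ^ N)⁻¹ *
            ((1 + |z.2 - w.2| / max (max (max (e₁'' z) (e₂'' z)) (max (e₁'' w) (e₂'' w))) lam⁻¹) ^ N)⁻¹ := by
  intro N
  let ψ₀ : 𝓢(ℝ, ℂ) :=
    ((HasCompactSupport.of_support_subset_isCompact isCompact_Icc hχ₀supp).comp_left
      Complex.ofReal_zero).toSchwartzMap (Complex.ofRealCLM.contDiff.comp hχ₀smooth)
  obtain ⟨C, hC₀, hC⟩ := maximal_restriction_stmt9_general (postcompCLM Complex.ofRealCLM χ) ψ₀ N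
  refine ⟨C, hC₀, fun lam hlam e₁' e₂' e₁'' e₂'' h₁' h₂' h₁'' h₂'' z w => ?_⟩
  simp only [Complex.ofReal_mul, Complex.ofReal_pow]
  exact hC lam (by positivity) e₁' e₂' e₁'' e₂'' (fun z => (h₁' z).1.le)
    (fun z => (h₂' z).1.le) (fun z => (h₁'' z).1.le) (fun z => (h₂'' z).1.le) z w
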